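/- Let G = ⟨a, b; r⟩ with r ⊆ F(a,b)′. If a Nielsen transformation φ of F(a,b) defines an inner automorphism of G, then φ is an inner automorphism of F(a,b). -/

import Mathlib

def innAut (G : Type*) [Group G] : Subgroup (MulAut G) := (MulAut.conj : G →* MulAut G).range

instance innAut_normal (G : Type*) [Group G] : (innAut G).Normal := by
  constructor
  rintro x ⟨g, rfl⟩ f
  refine ⟨f g, ?_⟩
  ext h
  simp [MulAut.conj_apply, MulAut.mul_apply, mul_assoc]

abbrev Out (G : Type*) [Group G] := MulAut G ⧸ innAut G

def ResiduallyFinite (G : Type*) [Group G] : Prop :=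
  ∀ g : G, g ≠ 1 → ∃ N : Subgroup G, N.Normal ∧ Finite (G ⧸ N) ∧ g ∉ N

noncomputable def expSum (i : Fin 2) : FreeGroup (Fin 2) →* Multiplicative ℤ :=
  FreeGroup.lift (fun j => Multiplicative.ofAdd (if j = i then (1 : ℤ) else 0))

noncomputable def σ (i : Fin 2) (w : FreeGroup (Fin 2)) : ℤ :=
  Multiplicative.toAdd (expSum i w)

def NielsenEquiv {G : Type*} [Group G] {n : ℕ} (Y Z : Fin n → G) : Prop :=
  ∃ φ : FreeGroup (Fin n) ≃* FreeGroup (Fin n),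
    ∀ i, FreeGroup.lift Y (φ (FreeGroup.of i)) = Z i

def SameTSystem {G : Type*} [Group G] {n : ℕ} (Y Z : Fin n → G) : Prop :=
  ∃ ψ : G ≃* G, NielsenEquiv (fun i => ψ (Y i)) Z

/-!
Since the relators lie in the derived subgroup, `φ` acts trivially on the abelianization of
`F = F(a, b)`, so the claim is Nielsen's theorem that such an automorphism of `F` is inner.

Shortening the images of the generators by Nielsen moves, up to a simultaneous conjugation, shows
that `Aut F` is generated by the inner automorphisms, the signed permutations of `a, b` and the
two transvections `b ↦ ab` and `a ↦ ba`. In `Out F`, inverting a generator conjugates each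
transvection to its inverse, and the quotient of two distinct transvections is a signed permutation
times a transvection. Negative powers can therefore be pushed out: every element of `Out F` has the
form `d P d'` with `d`, `d'` signed permutations and `P` a positive product of transvections. If it
acts trivially on the abelianization, then `P` acts there as a signed permutation. But every
positive factor increases the total exponent sum of the images of the generators, so `P = 1`, and
then `d d' = 1`.
-/

section GromovProduct

open FreeGroup (mk invRev IsReduced reduceCyclically)

/-- The length of the longest common prefix of two lists. -/
def commonPrefixLength {β : Type*} [DecidableEq β] : List β → List β → ℕ
  | a :: L, b :: M => if a = b then commonPrefixLength L M + 1 else 0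
  | _, _ => 0

theorem le_commonPrefixLength_iff {β : Type*} [DecidableEq β] {k : ℕ} {L M : List β} :
    k ≤ commonPrefixLength L M ↔ k ≤ L.length ∧ k ≤ M.length ∧ L.take k = M.take k := by
  induction L generalizing k M with
  | nil => cases M <;> cases k <;> simp [commonPrefixLength]
  | cons a L ih =>
    cases M with
    | nil => cases k <;> simp [commonPrefixLength]
    | cons b M =>
      cases k with
      | zero => simp
      | succ k => by_cases hab : a = b <;> simp [commonPrefixLength, hab, ih]

theorem isReduced_invRev {α : Type*} {L : List (α × Bool)} (h : IsReduced L) :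
    IsReduced (invRev L) := by
  classical
  rw [FreeGroup.isReduced_iff_reduce_eq, FreeGroup.reduce_invRev, h.reduce_eq]

theorem isReduced_invRev_cons_append_cons {α : Type*} {a b : α × Bool}
    {L M : List (α × Bool)} (hL : IsReduced (a :: L)) (hM : IsReduced (b :: M)) (hab : a ≠ b) :
    IsReduced (invRev (a :: L) ++ b :: M) := by
  have hinv := isReduced_invRev hL
  rw [FreeGroup.invRev_cons] at hinv ⊢
  refine List.IsChain.append hinv hM ?_
  obtain ⟨i, c⟩ := a
  obtain ⟨j, d⟩ := b
  suffices i = j → (!c) = d by simpa [invRev]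
  rintro rfl
  exact Bool.not_eq.2 (by simpa using hab)

variable {α : Type*} [DecidableEq α]

theorem norm_mk_of_isReduced {L : List (α × Bool)} (h : IsReduced L) :
    (mk L).norm = L.length := by
  rw [FreeGroup.norm, FreeGroup.toWord_mk, h.reduce_eq]

theorem norm_inv_mk_mul_mk {L M : List (α × Bool)} (hL : IsReduced L) (hM : IsReduced M) :
    ((mk L)⁻¹ * mk M).norm + 2 * commonPrefixLength L M = L.length + M.length := by
  induction L generalizing M with
  | nil => simp [commonPrefixLength, ← FreeGroup.one_eq_mk, norm_mk_of_isReduced hM]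
  | cons a L ih =>
    cases M with
    | nil =>
      simp [commonPrefixLength, ← FreeGroup.one_eq_mk, norm_mk_of_isReduced (isReduced_invRev hL)]
    | cons b M =>
      by_cases hab : a = b
      · subst hab
        have hcancel : (mk (a :: L))⁻¹ * mk (a :: M) = (mk L)⁻¹ * mk M := by
          rw [← List.singleton_append, ← List.singleton_append (l := M), ← FreeGroup.mul_mk,
            ← FreeGroup.mul_mk]
          group
        have := ih (hL.infix (List.suffix_cons a L).isInfix)
          (hM.infix (List.suffix_cons a M).isInfix)
        simp only [hcancel, commonPrefixLength, if_true, List.length_cons]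
        omega
      · rw [FreeGroup.inv_mk, FreeGroup.mul_mk,
          norm_mk_of_isReduced (isReduced_invRev_cons_append_cons hL hM hab)]
        simp [commonPrefixLength, hab]

/-- The Gromov product of `u` and `v` based at `1` in the Cayley tree of a free group, that is,
the length of the longest common prefix of their reduced words. -/
def gromovProduct (u v : FreeGroup α) : ℕ := commonPrefixLength u.toWord v.toWord

theorem norm_inv_mul_add_gromovProduct (u v : FreeGroup α) :
    (u⁻¹ * v).norm + 2 * gromovProduct u v = u.norm + v.norm := by
  have := norm_inv_mk_mul_mk (FreeGroup.isReduced_toWord (x := u))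
    (FreeGroup.isReduced_toWord (x := v))
  rwa [FreeGroup.mk_toWord, FreeGroup.mk_toWord] at this

theorem norm_mul_add_gromovProduct (u v : FreeGroup α) :
    (u * v).norm + 2 * gromovProduct u⁻¹ v = u.norm + v.norm := by
  simpa using norm_inv_mul_add_gromovProduct u⁻¹ v

theorem gromovProduct_comm (u v : FreeGroup α) : gromovProduct u v = gromovProduct v u :=
  eq_of_forall_le_iff fun k => by simp only [gromovProduct, le_commonPrefixLength_iff]; tauto

theorem min_gromovProduct_le (u v w : FreeGroup α) :
    min (gromovProduct u v) (gromovProduct v w) ≤ gromovProduct u w := by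
  obtain ⟨hu, -, huv⟩ := le_commonPrefixLength_iff.1
    (min_le_left (gromovProduct u v) (gromovProduct v w))
  obtain ⟨-, hw, hvw⟩ := le_commonPrefixLength_iff.1
    (min_le_right (gromovProduct u v) (gromovProduct v w))
  exact le_commonPrefixLength_iff.2 ⟨hu, hw, huv.trans hvw⟩

theorem gromovProduct_eq_of_lt {u v w : FreeGroup α}
    (h : gromovProduct u v < gromovProduct v w) : gromovProduct u w = gromovProduct u v := by
  have h₁ := min_gromovProduct_le u v w
  have h₂ := min_gromovProduct_le u w v
  rw [gromovProduct_comm w v] at h₂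
  omega

theorem exists_norm_eq_gromovProduct_eq {k : ℕ} {u : FreeGroup α} (h : k ≤ u.norm) :
    ∃ s : FreeGroup α, s.norm = k ∧ gromovProduct s u = k := by
  have hprefix := (FreeGroup.isReduced_toWord (x := u)).infix (List.take_prefix k _).isInfix
  have hlength : (u.toWord.take k).length = k := List.length_take_of_le h
  refine ⟨mk (u.toWord.take k), by rw [norm_mk_of_isReduced hprefix, hlength], ?_⟩
  refine eq_of_forall_le_iff fun j => ?_
  rw [gromovProduct, FreeGroup.toWord_mk, hprefix.reduce_eq, le_commonPrefixLength_iff, hlength]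
  refine ⟨fun hj => hj.1, fun hj => ⟨hj, hj.trans h, ?_⟩⟩
  rw [List.take_take, min_eq_left hj]

theorem norm_inv_mul_mul_add_le {s t y : FreeGroup α} (ht : t.norm ≤ gromovProduct t y)
    (hs : s.norm ≤ gromovProduct s y⁻¹) (h : s.norm + t.norm ≤ y.norm) :
    (t⁻¹ * y * s).norm + s.norm + t.norm ≤ y.norm := by
  have h₁ := norm_inv_mul_add_gromovProduct t y
  have h₂ := norm_inv_mul_add_gromovProduct (t⁻¹ * y)⁻¹ y⁻¹
  have h₃ := norm_mul_add_gromovProduct (t⁻¹ * y) s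
  have h₄ := min_gromovProduct_le (t⁻¹ * y)⁻¹ y⁻¹ s
  rw [gromovProduct_comm y⁻¹ s] at h₄
  rw [inv_inv, mul_inv_cancel_right, FreeGroup.norm_inv_eq, FreeGroup.norm_inv_eq,
    FreeGroup.norm_inv_eq] at h₂
  omega

theorem norm_pow_succ (u : FreeGroup α) (n : ℕ) :
    (u ^ (n + 1)).norm = u.norm + n * (reduceCyclically u.toWord).length := by
  have hu := congrArg List.length (reduceCyclically.conj_conjugator_reduceCyclically u.toWord)
  rw [FreeGroup.norm, FreeGroup.toWord_pow,
    reduceCyclically.reduce_flatten_replicate_succ FreeGroup.isReduced_toWord, FreeGroup.norm]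
  simp only [List.length_append, FreeGroup.invRev_length, List.length_flatten,
    List.map_replicate, List.sum_replicate, smul_eq_mul] at hu ⊢
  rw [← hu]
  ring

theorem reduceCyclically_toWord_ne_nil {u : FreeGroup α} (hu : u ≠ 1) :
    reduceCyclically u.toWord ≠ [] := by
  intro hnil
  have hconj := reduceCyclically.conj_conjugator_reduceCyclically u.toWord
  rw [hnil, List.append_nil] at hconj
  apply hu
  rw [← FreeGroup.mk_toWord (x := u), ← hconj, ← FreeGroup.mul_mk, ← FreeGroup.inv_mk,
    mul_inv_cancel]

theorem two_mul_gromovProduct_inv_self_lt {u : FreeGroup α} (hu : u ≠ 1) :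
    2 * gromovProduct u⁻¹ u < u.norm := by
  have hpos := List.length_pos_iff.2 (reduceCyclically_toWord_ne_nil hu)
  have hsq := norm_pow_succ u 1
  have hmul := norm_mul_add_gromovProduct u u
  rw [pow_succ, pow_one] at hsq
  omega

theorem gromovProduct_add_gromovProduct_inv_lt {x y : FreeGroup α} (hx : x ≠ 1)
    (h : 2 * gromovProduct y x ≤ x.norm) (h' : 2 * gromovProduct x⁻¹ y ≤ x.norm) :
    gromovProduct y x + gromovProduct x⁻¹ y < x.norm := by
  have hself := two_mul_gromovProduct_inv_self_lt hx
  have hmin := min_gromovProduct_le x⁻¹ y x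
  omega

theorem exists_norm_conj_add_norm_conj_lt {x y : FreeGroup α} (hx : x ≠ 1)
    (hle : x.norm ≤ y.norm) (hyx : 2 * gromovProduct y⁻¹ x = x.norm)
    (hxy : 2 * gromovProduct x⁻¹ y = x.norm) :
    ∃ t : FreeGroup α, (t * x * t⁻¹).norm + (t * (x * y) * t⁻¹).norm < x.norm + y.norm := by
  have hpos : x.norm ≠ 0 := mt FreeGroup.norm_eq_zero.1 hx
  -- Write `x = s * t⁻¹` with halves of equal length. Then `y` begins with `t` and ends with `s⁻¹`,
  -- so that `s⁻¹ * (x * y) * s = t⁻¹ * y * s` is shorter than `y` by the length of `x`.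
  obtain ⟨s, hs, hsx⟩ := exists_norm_eq_gromovProduct_eq (u := x)
    (k := gromovProduct y⁻¹ x) (by omega)
  set t := x⁻¹ * s with ht
  have ht_norm : t.norm = s.norm := by
    have := norm_inv_mul_add_gromovProduct s x
    rw [ht, ← FreeGroup.norm_inv_eq, mul_inv_rev, inv_inv]
    omega
  have ht_prefix : t.norm ≤ gromovProduct t y := by
    have := norm_inv_mul_add_gromovProduct t x⁻¹
    rw [ht, mul_inv_rev, inv_inv, mul_inv_cancel_right, ← ht, FreeGroup.norm_inv_eq,
      FreeGroup.norm_inv_eq] at this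
    have := min_gromovProduct_le t x⁻¹ y
    omega
  have hs_prefix : s.norm ≤ gromovProduct s y⁻¹ := by
    have := min_gromovProduct_le s x y⁻¹
    rw [gromovProduct_comm x] at this
    omega
  have hxy_conj : (s⁻¹ * (x * y) * s).norm + s.norm + t.norm ≤ y.norm := by
    have := norm_inv_mul_mul_add_le ht_prefix hs_prefix (by omega)
    rwa [ht, mul_inv_rev, inv_inv, mul_assoc s⁻¹] at this
  have hx_conj : (s⁻¹ * x * s).norm ≤ t.norm + s.norm := by
    have := FreeGroup.norm_mul_le t⁻¹ s
    rwa [FreeGroup.norm_inv_eq, ht, mul_inv_rev, inv_inv, ← ht] at this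
  refine ⟨s⁻¹, ?_⟩
  rw [inv_inv]
  omega

end GromovProduct

section NielsenReduced

open FreeGroup (mk IsReduced)

variable {ι α : Type*} [DecidableEq α]

/-- The condition N2 of Nielsen on the images under `f` of the generators and their inverses: in a
product `f p * f q * f r` of three of them some letter of `f q` survives the cancellation. -/
def IsNielsenReduced (f : FreeGroup ι →* FreeGroup α) : Prop :=
  ∀ p q r : ι × Bool, IsReduced [p, q, r] →
    gromovProduct (f (mk [p]))⁻¹ (f (mk [q])) + gromovProduct (f (mk [q]))⁻¹ (f (mk [r])) <
      (f (mk [q])).norm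

variable {f : FreeGroup ι →* FreeGroup α}

theorem gromovProduct_inv_map_mk_cons (hf : IsNielsenReduced f) {p q : ι × Bool}
    {L : List (ι × Bool)} (h : IsReduced (p :: q :: L)) :
    gromovProduct (f (mk [p]))⁻¹ (f (mk (q :: L))) =
        gromovProduct (f (mk [p]))⁻¹ (f (mk [q])) ∧
      L.length + 1 + gromovProduct (f (mk [p]))⁻¹ (f (mk [q])) ≤ (f (mk (q :: L))).norm := by
  induction L generalizing p q with
  | nil =>
    have := hf p q q (by simpa [FreeGroup.isReduced_cons_cons] using h)
    simp only [List.length_nil, true_and]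
    omega
  | cons r L ih =>
    have hqr : IsReduced (q :: r :: L) := h.infix (List.suffix_cons p _).isInfix
    obtain ⟨ih₁, ih₂⟩ := ih hqr
    have hlt := hf p q r (h.infix ⟨[], L, rfl⟩)
    have hmul : f (mk (q :: r :: L)) = f (mk [q]) * f (mk (r :: L)) := by
      rw [← map_mul, FreeGroup.mul_mk, List.singleton_append]
    have h₁ := norm_mul_add_gromovProduct (f (mk [q])) (f (mk (r :: L)))
    have h₂ := norm_inv_mul_add_gromovProduct (f (mk [q])) (f (mk (q :: r :: L)))
    rw [hmul, inv_mul_cancel_left, ← hmul] at h₂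
    rw [← hmul] at h₁
    refine ⟨gromovProduct_eq_of_lt (by omega), ?_⟩
    rw [List.length_cons]
    omega

theorem IsNielsenReduced.norm_le_norm_map [DecidableEq ι] (hf : IsNielsenReduced f)
    (w : FreeGroup ι) : w.norm ≤ (f w).norm := by
  have hw := FreeGroup.isReduced_toWord (x := w)
  rw [FreeGroup.norm, ← FreeGroup.mk_toWord (x := w), FreeGroup.toWord_mk,
    FreeGroup.reduce_toWord]
  generalize w.toWord = L at hw
  cases L with
  | nil => exact Nat.zero_le _
  | cons q L =>
    have := (gromovProduct_inv_map_mk_cons hf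
      (FreeGroup.isReduced_cons_cons.2 ⟨fun _ => rfl, hw⟩ : IsReduced (q :: q :: L))).2
    rw [List.length_cons]
    omega

theorem mk_singleton_not (i : ι) (b : Bool) : mk [(i, !b)] = (mk [(i, b)])⁻¹ := by
  simp [FreeGroup.inv_mk, FreeGroup.invRev]

/-- Minimality of the pair `f (of 0), f (of 1)`: the elementary Nielsen transformations do not
decrease its total length, even up to a simultaneous conjugation. -/
def IsNielsenMinimal (f : FreeGroup (Fin 2) →* FreeGroup α) : Prop :=
  ∀ p q : Fin 2 × Bool, p.1 ≠ q.1 → ∀ t : FreeGroup α,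
    (f (mk [p])).norm + (f (mk [q])).norm ≤
      (t * f (mk [p]) * t⁻¹).norm + (t * (f (mk [p]) * f (mk [q])) * t⁻¹).norm

theorem mk_singleton_ne_one (p : ι × Bool) : mk [p] ≠ 1 := fun h => by
  classical simpa [h] using norm_mk_of_isReduced (IsReduced.singleton (a := p))

section Minimal

variable {f : FreeGroup (Fin 2) →* FreeGroup α}

theorem IsNielsenMinimal.two_mul_gromovProduct_le (hf : IsNielsenMinimal f)
    (hinj : Function.Injective f) {p q : Fin 2 × Bool} (h : IsReduced [p, q]) :
    2 * gromovProduct (f (mk [p]))⁻¹ (f (mk [q])) ≤ (f (mk [p])).norm ∧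
      2 * gromovProduct (f (mk [p]))⁻¹ (f (mk [q])) ≤ (f (mk [q])).norm := by
  by_cases hpq : p.1 = q.1
  · obtain rfl : p = q := Prod.ext hpq (by simpa [hpq] using h)
    have := two_mul_gromovProduct_inv_self_lt
      ((map_ne_one_iff f hinj).2 (mk_singleton_ne_one p))
    omega
  · have hmul := norm_mul_add_gromovProduct (f (mk [p])) (f (mk [q]))
    have hp := hf p q hpq 1
    have hq := hf (q.1, !q.2) (p.1, !p.2) (Ne.symm hpq) 1
    simp only [mk_singleton_not, map_inv, Prod.mk.eta, one_mul, inv_one, mul_one, ← mul_inv_rev,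
      FreeGroup.norm_inv_eq] at hp hq
    omega

theorem IsNielsenMinimal.isNielsenReduced (hf : IsNielsenMinimal f)
    (hinj : Function.Injective f) : IsNielsenReduced f := by
  intro p q r hpqr
  have hq : f (mk [q]) ≠ 1 := (map_ne_one_iff f hinj).2 (mk_singleton_ne_one q)
  have hself := two_mul_gromovProduct_inv_self_lt hq
  have hpq := hf.two_mul_gromovProduct_le hinj (hpqr.infix ⟨[], [r], rfl⟩ : IsReduced [p, q])
  have hqr := hf.two_mul_gromovProduct_le hinj (hpqr.infix ⟨[p], [], rfl⟩ : IsReduced [q, r])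
  rw [FreeGroup.isReduced_cons_cons, FreeGroup.isReduced_cons_cons] at hpqr
  by_cases hpq' : p.1 = q.1
  · obtain rfl : p = q := Prod.ext hpq' (hpqr.1 hpq')
    omega
  by_cases hqr' : q.1 = r.1
  · obtain rfl : q = r := Prod.ext hqr' (hpqr.2.1 hqr')
    omega
  have hpr : r.1 = p.1 := by omega
  obtain rfl | hr : r = p ∨ r = (p.1, !p.2) := by
    rcases Bool.eq_or_eq_not r.2 p.2 with h | h
    · exact Or.inl (Prod.ext hpr h)
    · exact Or.inr (Prod.ext hpr h)
  · by_contra! hge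
    obtain ⟨t, ht⟩ := exists_norm_conj_add_norm_conj_lt (y := f (mk [r])) hq (by omega)
      (by omega) (by omega)
    exact ht.not_ge (hf q r hqr' t)
  · rw [hr, mk_singleton_not, map_inv] at hqr ⊢
    exact gromovProduct_add_gromovProduct_inv_lt hq hpq.2 hqr.1

end Minimal

end NielsenReduced

section ExponentSum

open FreeGroup (mk of)

@[simp]
theorem σ_mul (i : Fin 2) (u v : FreeGroup (Fin 2)) : σ i (u * v) = σ i u + σ i v := by
  simp [σ]

@[simp]
theorem σ_inv (i : Fin 2) (u : FreeGroup (Fin 2)) : σ i u⁻¹ = -σ i u := by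
  simp [σ]

@[simp]
theorem σ_of (i j : Fin 2) : σ i (of j) = if j = i then 1 else 0 := by
  simp [σ, expSum]

theorem σ_mk_singleton (i : Fin 2) (p : Fin 2 × Bool) :
    σ i (mk [p]) = if p.1 = i then (if p.2 then 1 else -1) else 0 := by
  obtain ⟨j, b⟩ := p
  cases b
  · change σ i (mk [(j, !true)]) = _
    rw [mk_singleton_not, σ_inv]
    change -σ i (of j) = _
    simp [apply_ite]
  · exact σ_of i j

theorem σ_eq_of_abelianization_of_eq {u v : FreeGroup (Fin 2)}
    (h : Abelianization.of u = Abelianization.of v) (i : Fin 2) : σ i u = σ i v := by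
  rw [σ, σ, ← Abelianization.lift_apply_of (expSum i) u, h, Abelianization.lift_apply_of]

end ExponentSum

section NielsenTheorem

open FreeGroup (mk of)

theorem mulAut_ext {α : Type*} {φ ψ : MulAut (FreeGroup α)}
    (h : ∀ i, φ (of i) = ψ (of i)) : φ = ψ :=
  MulEquiv.toMonoidHom_injective (FreeGroup.ext_hom _ _ h)

/-- The automorphism exchanging the two generators of the free group of rank two. -/
def swapAut : MulAut (FreeGroup (Fin 2)) := FreeGroup.freeGroupCongr (Equiv.swap 0 1)

/-- The automorphism inverting the first generator and fixing the second one. -/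
def invAut : MulAut (FreeGroup (Fin 2)) :=
  MonoidHom.toMulEquiv (FreeGroup.lift ![(of 0)⁻¹, of 1]) (FreeGroup.lift ![(of 0)⁻¹, of 1])
    (by ext i; fin_cases i <;> simp) (by ext i; fin_cases i <;> simp)

/-- The automorphism fixing the first generator and multiplying the second one by it on the
left. -/
def transvectionAut : MulAut (FreeGroup (Fin 2)) :=
  MonoidHom.toMulEquiv (FreeGroup.lift ![of 0, of 0 * of 1])
    (FreeGroup.lift ![of 0, (of 0)⁻¹ * of 1])
    (by ext i; fin_cases i <;> simp) (by ext i; fin_cases i <;> simp)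

/-- The automorphism fixing the second generator and multiplying the first one by it on the
left. -/
def transvectionAut' : MulAut (FreeGroup (Fin 2)) := swapAut * transvectionAut * swapAut

@[simp]
theorem swapAut_of_zero : swapAut (of 0) = of 1 := rfl

@[simp]
theorem swapAut_of_one : swapAut (of 1) = of 0 := rfl

@[simp]
theorem invAut_of_zero : invAut (of 0) = (of 0)⁻¹ := rfl

@[simp]
theorem invAut_of_one : invAut (of 1) = of 1 := rfl

@[simp]
theorem transvectionAut_of_zero : transvectionAut (of 0) = of 0 := rfl

@[simp]
theorem transvectionAut_of_one : transvectionAut (of 1) = of 0 * of 1 := rfl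

@[simp]
theorem transvectionAut'_of_zero : transvectionAut' (of 0) = of 1 * of 0 := rfl

@[simp]
theorem transvectionAut'_of_one : transvectionAut' (of 1) = of 1 := rfl

/-- The automorphisms of the free group of rank two permuting the generators and their inverses,
given by generators. -/
def signedPermAut : Subgroup (MulAut (FreeGroup (Fin 2))) := Subgroup.closure {swapAut, invAut}

/-- The two positive elementary Nielsen transformations, which multiply one generator by the other
one on the left. -/
def transvections : Set (MulAut (FreeGroup (Fin 2))) := {transvectionAut, transvectionAut'}

theorem swapAut_mem_signedPermAut : swapAut ∈ signedPermAut := Subgroup.subset_closure (by simp)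

theorem invAut_mem_signedPermAut : invAut ∈ signedPermAut := Subgroup.subset_closure (by simp)

theorem exists_mem_signedPermAut_apply_of_eq {p q : Fin 2 × Bool} (h : p.1 ≠ q.1) :
    ∃ δ ∈ signedPermAut, δ (of 0) = mk [p] ∧ δ (of 1) = mk [q] := by
  have ht := swapAut_mem_signedPermAut
  have hn := invAut_mem_signedPermAut
  wlog hp : p.1 = 0 generalizing p q
  · obtain ⟨δ, hδ, h₀, h₁⟩ := this h.symm (by omega)
    exact ⟨δ * swapAut, mul_mem hδ ht, by simp [h₀, h₁]⟩
  obtain ⟨i, b⟩ := p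
  obtain ⟨j, c⟩ := q
  obtain rfl : i = 0 := hp
  obtain rfl : j = 1 := by simp only at h; omega
  have hinv (k : Fin 2) : mk [(k, false)] = (of k)⁻¹ := mk_singleton_not k true
  have hpos (k : Fin 2) : mk [(k, true)] = of k := rfl
  cases b <;> cases c <;> simp only [hinv, hpos]
  · exact ⟨invAut * (swapAut * invAut * swapAut), mul_mem hn (mul_mem (mul_mem ht hn) ht), by simp⟩
  · exact ⟨invAut, hn, by simp⟩
  · exact ⟨swapAut * invAut * swapAut, mul_mem (mul_mem ht hn) ht, by simp⟩
  · exact ⟨1, one_mem _, by simp⟩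

open scoped Pointwise in
theorem exists_apply_mk_singleton_eq {δ : MulAut (FreeGroup (Fin 2))} (hδ : δ ∈ signedPermAut)
    (p : Fin 2 × Bool) : ∃ q, δ (mk [p]) = mk [q] := by
  let letters : Set (FreeGroup (Fin 2)) := Set.range fun p => mk [p]
  have hle : signedPermAut ≤ MulAction.stabilizer (MulAut (FreeGroup (Fin 2))) letters := by
    refine (Subgroup.closure_le _).2 fun s hs =>
      (MulAction.mem_stabilizer_set' (Set.finite_range _)).2 ?_
    rintro _ ⟨⟨i, b⟩, rfl⟩
    obtain rfl | rfl := hs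
    · exact ⟨(Equiv.swap 0 1 i, b), rfl⟩
    · fin_cases i <;> cases b
      exacts [⟨(0, true), rfl⟩, ⟨(0, false), rfl⟩, ⟨(1, false), rfl⟩, ⟨(1, true), rfl⟩]
  obtain ⟨q, hq⟩ := (MulAction.mem_stabilizer_set' (Set.finite_range _)).1 (hle hδ)
    (Set.mem_range_self p)
  exact ⟨q, hq.symm⟩

theorem exists_eq_mk_singleton_of_norm_eq_one {α : Type*} [DecidableEq α] {w : FreeGroup α}
    (hw : w.norm = 1) : ∃ p, w = mk [p] := by
  obtain ⟨p, hp⟩ := List.length_eq_one_iff.1 hw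
  exact ⟨p, by rw [← hp, FreeGroup.mk_toWord]⟩

theorem mem_signedPermAut_of_norm_le {ψ : MulAut (FreeGroup (Fin 2))}
    (hψ : ∀ w, w.norm ≤ (ψ w).norm) : ψ ∈ signedPermAut := by
  have hletter (i : Fin 2) : ∃ p, ψ⁻¹ (of i) = mk [p] := by
    refine exists_eq_mk_singleton_of_norm_eq_one (le_antisymm ?_ ?_)
    · simpa using hψ (ψ⁻¹ (of i))
    · exact Nat.one_le_iff_ne_zero.2 (by simp)
  obtain ⟨⟨i, b⟩, hp⟩ := hletter 0
  obtain ⟨⟨j, c⟩, hq⟩ := hletter 1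
  have hij : i ≠ j := by
    rintro rfl
    have : (of 0 : FreeGroup (Fin 2)) = of 1 ∨ (of 0 : FreeGroup (Fin 2)) = (of 1)⁻¹ := by
      rcases Bool.eq_or_eq_not b c with rfl | rfl
      · exact Or.inl (ψ⁻¹.injective (hp.trans hq.symm))
      · exact Or.inr (ψ⁻¹.injective (by rw [hp, map_inv, hq, mk_singleton_not]))
    rcases this with h | h <;> simpa using congrArg (σ 0) h
  obtain ⟨δ, hδ, h₀, h₁⟩ := exists_mem_signedPermAut_apply_of_eq
    (p := (i, b)) (q := (j, c)) hij
  have : ψ⁻¹ = δ := mulAut_ext (Fin.forall_fin_two.2 ⟨hp.trans h₀.symm, hq.trans h₁.symm⟩)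
  exact inv_mem_iff.1 (this ▸ hδ)

theorem conj_mem_innAut {G : Type*} [Group G] (g : G) : MulAut.conj g ∈ innAut G := ⟨g, rfl⟩

theorem norm_map_mk_add_norm_map_mk {α : Type*} [DecidableEq α]
    (f : FreeGroup (Fin 2) →* FreeGroup α) {p q : Fin 2 × Bool} (h : p.1 ≠ q.1) :
    (f (mk [p])).norm + (f (mk [q])).norm = ∑ i, (f (of i)).norm := by
  have hgen (p : Fin 2 × Bool) : (f (mk [p])).norm = (f (of p.1)).norm := by
    obtain ⟨i, b⟩ := p
    cases b
    · change (f (mk [(i, !true)])).norm = _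
      rw [mk_singleton_not, map_inv, FreeGroup.norm_inv_eq]
      rfl
    · rfl
  rw [hgen, hgen, Fin.sum_univ_two]
  obtain ⟨hp, hq⟩ | ⟨hp, hq⟩ : p.1 = 0 ∧ q.1 = 1 ∨ p.1 = 1 ∧ q.1 = 0 := by omega
  · rw [hp, hq]
  · rw [hp, hq, add_comm]

theorem signedPermAut_sup_closure_transvections_sup_innAut :
    signedPermAut ⊔ Subgroup.closure transvections ⊔ innAut (FreeGroup (Fin 2)) = ⊤ := by
  set N := signedPermAut ⊔ Subgroup.closure transvections ⊔ innAut (FreeGroup (Fin 2))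
  have hsigned : signedPermAut ≤ N := le_sup_of_le_left le_sup_left
  have htransvection : transvectionAut ∈ N :=
    (le_sup_of_le_left le_sup_right : _ ≤ N) (Subgroup.subset_closure (Or.inl rfl))
  have hconj (t) : MulAut.conj t ∈ N := (le_sup_right : _ ≤ N) (conj_mem_innAut t)
  refine eq_top_iff.2 fun φ _ => ?_
  induction hn : ∑ i, (φ (of i)).norm using Nat.strong_induction_on generalizing φ with
  | _ n ih =>
    by_cases hmin : IsNielsenMinimal (φ : FreeGroup (Fin 2) →* FreeGroup (Fin 2))
    · exact hsigned (mem_signedPermAut_of_norm_le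
        (hmin.isNielsenReduced φ.injective).norm_le_norm_map)
    · simp only [IsNielsenMinimal, not_forall, not_le] at hmin
      obtain ⟨p, q, hpq, t, hlt⟩ := hmin
      obtain ⟨δ, hδ, h₀, h₁⟩ := exists_mem_signedPermAut_apply_of_eq hpq
      have hmem := ih _ ?_ (MulAut.conj t * φ * (δ * transvectionAut)) trivial rfl
      · rwa [Subgroup.mul_mem_cancel_right _ (mul_mem (hsigned hδ) htransvection),
          Subgroup.mul_mem_cancel_left _ (hconj t)] at hmem
      · rw [norm_map_mk_add_norm_map_mk _ hpq] at hlt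
        rw [← hn]
        simpa [Fin.sum_univ_two, h₀, h₁, -FreeGroup.mul_mk] using hlt

end NielsenTheorem

section Factorization

open scoped Pointwise

variable {G : Type*} [Group G] {D : Subgroup G} {A : Set G}

theorem mem_normalizer_union_inv (hA : A.Finite) {g : G}
    (h : ∀ a ∈ A, g * a * g⁻¹ ∈ A ∪ A⁻¹) : g ∈ Subgroup.normalizer (A ∪ A⁻¹) := by
  have : Finite ↑(A ∪ A⁻¹) := hA.union hA.inv
  refine Subgroup.mem_normalizer_fintype ?_
  rintro a (ha | ha)
  · exact h a ha
  · have := h a⁻¹ ha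
    rw [← conj_inv] at this
    simpa [or_comm] using this

theorem inv_mul_mem_mul_closure_mul (hinv : A⁻¹ ⊆ D * A * D)
    (hcancel : A⁻¹ * A ⊆ D * (Submonoid.closure A : Set G)) {a P : G} (ha : a ∈ A⁻¹)
    (hP : P ∈ Submonoid.closure A) : a * P ∈ (D * Submonoid.closure A * D : Set G) := by
  induction hP using Submonoid.closure_induction_left with
  | one =>
    rw [mul_one]
    exact Set.mul_subset_mul_right (Set.mul_subset_mul_left Submonoid.subset_closure) (hinv ha)
  | mul_left b hb P hP _ =>
    obtain ⟨d, hd, Q, hQ, hdQ⟩ := hcancel (Set.mul_mem_mul ha hb)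
    refine ⟨_, Set.mul_mem_mul hd (mul_mem hQ hP), 1, one_mem D, ?_⟩
    calc d * (Q * P) * 1 = d * Q * P := by group
      _ = a * (b * P) := by rw [← mul_assoc, ← hdQ]

theorem mem_mul_closure_mul_of_mem_sup (hD : D ≤ Subgroup.normalizer (A ∪ A⁻¹))
    (hinv : A⁻¹ ⊆ D * A * D) (hcancel : A⁻¹ * A ⊆ D * (Submonoid.closure A : Set G)) {g : G}
    (hg : g ∈ D ⊔ Subgroup.closure A) : g ∈ (D * Submonoid.closure A * D : Set G) := by
  set T : Set G := D * Submonoid.closure A * D with hT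
  have hD_mul {d x : G} (hd : d ∈ D) (hx : x ∈ T) : d * x ∈ T := by
    have := Set.mul_mem_mul hd hx
    rwa [hT, ← mul_assoc, ← mul_assoc, coe_mul_coe, ← hT] at this
  have hmul_D {x d : G} (hx : x ∈ T) (hd : d ∈ D) : x * d ∈ T := by
    have := Set.mul_mem_mul hx hd
    rwa [hT, mul_assoc, coe_mul_coe, ← hT] at this
  have hA_mul {a x : G} (ha : a ∈ A ∪ A⁻¹) (hx : x ∈ T) : a * x ∈ T := by
    obtain ⟨_, ⟨d, hd, P, hP, rfl⟩, d', hd', rfl⟩ := hx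
    have hconj : d⁻¹ * a * d ∈ A ∪ A⁻¹ := (Subgroup.mem_set_normalizer_iff''.1 (hD hd) a).1 ha
    have hmul : d⁻¹ * a * d * P ∈ T := by
      rcases hconj with h | h
      · exact ⟨_, Set.mul_mem_mul (one_mem D)
          (mul_mem (Submonoid.subset_closure h) hP), 1, one_mem D, by simp⟩
      · exact inv_mul_mem_mul_closure_mul hinv hcancel h hP
    convert hD_mul hd (hmul_D hmul hd') using 1
    group
  rw [← Subgroup.closure_eq D, ← Subgroup.closure_union] at hg
  induction hg using Subgroup.closure_induction_left with
  | one => exact ⟨1, ⟨1, one_mem D, 1, one_mem _, mul_one 1⟩, 1, one_mem D, mul_one 1⟩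
  | mul_left s hs x _ ih => exact hs.elim (hD_mul · ih) fun h => hA_mul (Or.inl h) ih
  | inv_mul_cancel s hs x _ ih =>
    exact hs.elim (fun h => hD_mul (inv_mem h) ih) fun h =>
      hA_mul (Or.inr (Set.inv_mem_inv.2 h)) ih

end Factorization

section PositiveDecomposition

open FreeGroup (of)
open scoped Pointwise

theorem swapAut_inv : swapAut⁻¹ = swapAut :=
  inv_eq_of_mul_eq_one_left (mulAut_ext (Fin.forall_fin_two.2 (by simp)))

theorem invAut_inv : invAut⁻¹ = invAut :=
  inv_eq_of_mul_eq_one_left (mulAut_ext (Fin.forall_fin_two.2 (by simp)))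

theorem swapAut_mul_transvectionAut_mul_inv :
    swapAut * transvectionAut * swapAut⁻¹ = transvectionAut' := by
  rw [swapAut_inv, transvectionAut']

theorem swapAut_mul_transvectionAut'_mul_inv :
    swapAut * transvectionAut' * swapAut⁻¹ = transvectionAut := by
  rw [← swapAut_mul_transvectionAut_mul_inv, swapAut_inv]
  exact mulAut_ext (Fin.forall_fin_two.2 (by simp))

theorem mk_eq_mk_of_apply_of {α : Type*} {φ ψ : MulAut (FreeGroup α)} (g : FreeGroup α)
    (h : ∀ i, φ (of i) = g * ψ (of i) * g⁻¹) : (φ : Out (FreeGroup α)) = ψ := by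
  have : φ = MulAut.conj g * ψ := mulAut_ext h
  rw [this, QuotientGroup.mk_mul, (QuotientGroup.eq_one_iff _).2 (conj_mem_innAut g), one_mul]

theorem mk_invAut_mul_transvectionAut_mul_inv :
    (invAut * transvectionAut * invAut⁻¹ : Out (FreeGroup (Fin 2))) = (↑transvectionAut)⁻¹ := by
  rw [invAut_inv, eq_inv_iff_mul_eq_one]
  exact mk_eq_mk_of_apply_of (φ := invAut * transvectionAut * invAut * transvectionAut) (ψ := 1) 1
    (Fin.forall_fin_two.2 (by simp))

theorem mk_invAut_mul_transvectionAut'_mul_inv :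
    (invAut * transvectionAut' * invAut⁻¹ : Out (FreeGroup (Fin 2))) =
      (↑transvectionAut')⁻¹ := by
  rw [invAut_inv, eq_inv_iff_mul_eq_one]
  exact mk_eq_mk_of_apply_of (φ := invAut * transvectionAut' * invAut * transvectionAut')
    (ψ := 1) (of 1) (Fin.forall_fin_two.2 (by simp [mul_assoc]))

theorem mk_transvectionAut_inv_mul_transvectionAut' :
    ((↑transvectionAut)⁻¹ * transvectionAut' : Out (FreeGroup (Fin 2))) =
      invAut * swapAut * transvectionAut := by
  rw [inv_mul_eq_iff_eq_mul]
  exact mk_eq_mk_of_apply_of (φ := transvectionAut')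
    (ψ := transvectionAut * (invAut * swapAut * transvectionAut)) (of 0)⁻¹
    (Fin.forall_fin_two.2 (by simp [mul_assoc]))

theorem mk_transvectionAut'_inv_mul_transvectionAut :
    ((↑transvectionAut')⁻¹ * transvectionAut : Out (FreeGroup (Fin 2))) =
      swapAut * invAut * transvectionAut' := by
  rw [inv_mul_eq_iff_eq_mul]
  exact mk_eq_mk_of_apply_of (φ := transvectionAut)
    (ψ := transvectionAut' * (swapAut * invAut * transvectionAut')) (of 1)⁻¹
    (Fin.forall_fin_two.2 (by simp [mul_assoc]))

local notation "π" => QuotientGroup.mk' (innAut (FreeGroup (Fin 2)))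

theorem map_signedPermAut_le_normalizer :
    signedPermAut.map π ≤ Subgroup.normalizer (π '' transvections ∪ (π '' transvections)⁻¹) := by
  have hfinite : (π '' transvections).Finite := (Set.toFinite {_, _}).image _
  have hmem : π transvectionAut ∈ π '' transvections := ⟨_, Or.inl rfl, rfl⟩
  have hmem' : π transvectionAut' ∈ π '' transvections := ⟨_, Or.inr rfl, rfl⟩
  rw [Subgroup.map_le_iff_le_comap, signedPermAut, Subgroup.closure_le]
  rintro s (rfl | rfl) <;> refine mem_normalizer_union_inv hfinite ?_ <;>
    rintro _ ⟨a, rfl | rfl, rfl⟩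
  · rw [← map_inv, ← map_mul, ← map_mul, swapAut_mul_transvectionAut_mul_inv]
    exact Or.inl hmem'
  · rw [← map_inv, ← map_mul, ← map_mul, swapAut_mul_transvectionAut'_mul_inv]
    exact Or.inl hmem
  · exact Or.inr (mk_invAut_mul_transvectionAut_mul_inv ▸ Set.inv_mem_inv.2 hmem)
  · exact Or.inr (mk_invAut_mul_transvectionAut'_mul_inv ▸ Set.inv_mem_inv.2 hmem')

theorem inv_image_transvections_subset :
    (π '' transvections)⁻¹ ⊆ signedPermAut.map π * π '' transvections * signedPermAut.map π := by
  have hinv : π invAut ∈ signedPermAut.map π :=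
    Subgroup.mem_map_of_mem _ invAut_mem_signedPermAut
  rintro _ ⟨a, rfl | rfl, h⟩ <;> obtain rfl := inv_eq_iff_eq_inv.1 h.symm
  · exact ⟨_, Set.mul_mem_mul hinv ⟨_, Or.inl rfl, rfl⟩, _, inv_mem hinv,
      mk_invAut_mul_transvectionAut_mul_inv⟩
  · exact ⟨_, Set.mul_mem_mul hinv ⟨_, Or.inr rfl, rfl⟩, _, inv_mem hinv,
      mk_invAut_mul_transvectionAut'_mul_inv⟩

theorem inv_image_transvections_mul_subset :
    (π '' transvections)⁻¹ * π '' transvections ⊆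
      (signedPermAut.map π : Set (Out (FreeGroup (Fin 2)))) *
        Submonoid.closure (π '' transvections) := by
  have hinv : π invAut ∈ signedPermAut.map π :=
    Subgroup.mem_map_of_mem _ invAut_mem_signedPermAut
  have hswap : π swapAut ∈ signedPermAut.map π :=
    Subgroup.mem_map_of_mem _ swapAut_mem_signedPermAut
  rintro _ ⟨_, ⟨a, ha, h⟩, _, ⟨b, hb, rfl⟩, rfl⟩
  obtain rfl := inv_eq_iff_eq_inv.1 h.symm
  have hmem {b} (hb : b ∈ transvections) : π b ∈ Submonoid.closure (π '' transvections) :=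
    Submonoid.subset_closure ⟨b, hb, rfl⟩
  rcases ha with rfl | rfl <;> rcases hb with rfl | rfl
  · exact ⟨1, one_mem _, 1, one_mem _, by group⟩
  · exact ⟨_, mul_mem hinv hswap, _, hmem (Or.inl rfl),
      mk_transvectionAut_inv_mul_transvectionAut'.symm⟩
  · exact ⟨_, mul_mem hswap hinv, _, hmem (Or.inr rfl),
      mk_transvectionAut'_inv_mul_transvectionAut.symm⟩
  · exact ⟨1, one_mem _, 1, one_mem _, by group⟩

theorem exists_eq_conj_mul (φ : MulAut (FreeGroup (Fin 2))) :
    ∃ u, ∃ d ∈ signedPermAut, ∃ P ∈ Submonoid.closure transvections, ∃ d' ∈ signedPermAut,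
      φ = MulAut.conj u * (d * P * d') := by
  have hφ : φ ∈ signedPermAut ⊔ Subgroup.closure transvections ⊔ innAut (FreeGroup (Fin 2)) :=
    signedPermAut_sup_closure_transvections_sup_innAut ▸ Subgroup.mem_top φ
  obtain ⟨ψ, hψ, ι, hι, rfl⟩ := Subgroup.mem_sup_of_normal_right.1 hφ
  have hmem : π ψ ∈ signedPermAut.map π ⊔ Subgroup.closure (π '' transvections) := by
    rw [← MonoidHom.map_closure, ← Subgroup.map_sup]
    exact Subgroup.mem_map_of_mem _ hψ
  obtain ⟨_, ⟨_, ⟨d, hd, rfl⟩, _, hP, rfl⟩, _, ⟨d', hd', rfl⟩, h⟩ :=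
    mem_mul_closure_mul_of_mem_sup map_signedPermAut_le_normalizer
      inv_image_transvections_subset inv_image_transvections_mul_subset hmem
  rw [← MonoidHom.map_mclosure] at hP
  obtain ⟨P, hP, rfl⟩ := hP
  have : π (ψ * ι) = π (d * P * d') := by
    rw [map_mul, MonoidHom.mem_ker.1 ((QuotientGroup.ker_mk' _).ge hι), mul_one]
    exact h.symm
  obtain ⟨u, hu⟩ := QuotientGroup.eq_iff_div_mem.1 this
  exact ⟨u, d, hd, P, hP, d', hd', by rw [hu, div_mul_cancel]⟩

end PositiveDecomposition

section IAAutomorphisms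

open FreeGroup (mk of)

/-- The subgroup of IA-automorphisms of `G`: those inducing the identity on the abelianization. -/
def iaAut (G : Type*) [Group G] : Subgroup (MulAut G) :=
  MonoidHom.ker
    { toFun := fun φ : MulAut G => (MulEquiv.abelianizationCongr φ : MulAut (Abelianization G))
      map_one' := abelianizationCongr_refl
      map_mul' := fun φ ψ => (abelianizationCongr_trans ψ φ).symm }

instance iaAut_normal (G : Type*) [Group G] : (iaAut G).Normal := MonoidHom.normal_ker _

theorem mem_iaAut_iff {G : Type*} [Group G] {φ : MulAut G} :
    φ ∈ iaAut G ↔ ∀ w, Abelianization.of (φ w) = Abelianization.of w := by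
  refine ⟨fun h w => ?_, fun h => ?_⟩
  · exact DFunLike.congr_fun (MonoidHom.mem_ker.1 h) (Abelianization.of w)
  · refine MonoidHom.mem_ker.2 (MulEquiv.toMonoidHom_injective (Abelianization.hom_ext _ _ ?_))
    exact MonoidHom.ext h

theorem innAut_le_iaAut (G : Type*) [Group G] : innAut G ≤ iaAut G := by
  rintro _ ⟨g, rfl⟩
  exact mem_iaAut_iff.2 fun w => by
    rw [MulAut.conj_apply, map_mul, map_mul, map_inv, mul_inv_cancel_comm]

theorem σ_apply_of_mem_iaAut {φ : MulAut (FreeGroup (Fin 2))}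
    (hφ : φ ∈ iaAut (FreeGroup (Fin 2))) (i : Fin 2) (w : FreeGroup (Fin 2)) :
    σ i (φ w) = σ i w :=
  σ_eq_of_abelianization_of_eq (mem_iaAut_iff.1 hφ w) i

theorem iaAut_inf_signedPermAut : iaAut (FreeGroup (Fin 2)) ⊓ signedPermAut = ⊥ := by
  refine eq_bot_iff.2 fun δ ⟨hia, hsigned⟩ => Subgroup.mem_bot.2 (mulAut_ext fun j => ?_)
  obtain ⟨⟨i, b⟩, hp⟩ := exists_apply_mk_singleton_eq hsigned (j, true)
  have hσ : σ j (mk [(i, b)]) = 1 := by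
    rw [← hp]
    exact (σ_apply_of_mem_iaAut hia j (of j)).trans (by simp)
  rw [σ_mk_singleton] at hσ
  split_ifs at hσ with hi hb
  · obtain rfl : i = j := hi
    obtain rfl : b = true := hb
    exact hp
  · exact absurd hσ zero_ne_one

theorem sum_σ_mul (u v : FreeGroup (Fin 2)) :
    ∑ i, σ i (u * v) = ∑ i, σ i u + ∑ i, σ i v := by
  simp only [σ_mul, Finset.sum_add_distrib]

theorem one_le_sum_σ_apply_of {P : MulAut (FreeGroup (Fin 2))}
    (hP : P ∈ Submonoid.closure transvections) : ∀ j, 1 ≤ ∑ i, σ i (P (of j)) := by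
  induction hP using Submonoid.closure_induction_right with
  | one => simp
  | mul_right P _ t ht ih =>
    have h₀ := ih 0
    have h₁ := ih 1
    rcases ht with rfl | rfl
    · refine Fin.forall_fin_two.2 ⟨h₀, ?_⟩
      rw [MulAut.mul_apply, transvectionAut_of_one, map_mul, sum_σ_mul]
      omega
    · refine Fin.forall_fin_two.2 ⟨?_, h₁⟩
      rw [MulAut.mul_apply, transvectionAut'_of_zero, map_mul, sum_σ_mul]
      omega

theorem eq_one_of_sum_σ_apply_of_le_one {P : MulAut (FreeGroup (Fin 2))}
    (hP : P ∈ Submonoid.closure transvections) (h : ∀ j, ∑ i, σ i (P (of j)) ≤ 1) : P = 1 := by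
  cases hP using Submonoid.closure_induction_right with
  | one => rfl
  | mul_right P hP t ht =>
    exfalso
    have h₀ := one_le_sum_σ_apply_of hP 0
    have h₁ := one_le_sum_σ_apply_of hP 1
    rcases ht with rfl | rfl
    · have := h 1
      rw [MulAut.mul_apply, transvectionAut_of_one, map_mul, sum_σ_mul] at this
      omega
    · have := h 0
      rw [MulAut.mul_apply, transvectionAut'_of_zero, map_mul, sum_σ_mul] at this
      omega

theorem sum_σ_mk_singleton_le_one (p : Fin 2 × Bool) : ∑ i, σ i (mk [p]) ≤ 1 := by
  simp only [σ_mk_singleton, Finset.sum_ite_eq, Finset.mem_univ, if_true]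
  split_ifs <;> simp

theorem iaAut_le_innAut : iaAut (FreeGroup (Fin 2)) ≤ innAut (FreeGroup (Fin 2)) := by
  intro φ hφ
  obtain ⟨u, d, hd, P, hP, d', hd', rfl⟩ := exists_eq_conj_mul φ
  have hia : d * P * d' ∈ iaAut (FreeGroup (Fin 2)) :=
    (Subgroup.mul_mem_cancel_left _ (innAut_le_iaAut _ (conj_mem_innAut u))).1 hφ
  have hP_one : P = 1 := by
    refine eq_one_of_sum_σ_apply_of_le_one hP fun j => ?_
    have hPd : P * (d' * d) ∈ iaAut (FreeGroup (Fin 2)) := by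
      rw [← mul_assoc]
      exact (iaAut_normal _).mem_comm (by rwa [← mul_assoc])
    obtain ⟨q, hq⟩ : ∃ q, (d' * d)⁻¹ (of j) = mk [q] :=
      exists_apply_mk_singleton_eq (inv_mem (mul_mem hd' hd)) (j, true)
    have hσ (i : Fin 2) : σ i (P (of j)) = σ i (mk [q]) := by
      rw [← hq, ← σ_apply_of_mem_iaAut hPd i ((d' * d)⁻¹ (of j)), ← MulAut.mul_apply,
        mul_inv_cancel_right]
    simpa only [hσ] using sum_σ_mk_singleton_le_one q
  subst hP_one
  rw [mul_one] at hia ⊢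
  have hone : d * d' = 1 := by
    rw [← Subgroup.mem_bot, ← iaAut_inf_signedPermAut]
    exact ⟨hia, mul_mem hd hd'⟩
  rw [hone, mul_one]
  exact conj_mem_innAut u

end IAAutomorphisms

section PresentedGroup

theorem abelianization_of_eq_of_presentedGroup_mk_eq {α : Type*} {rels : Set (FreeGroup α)}
    (hrels : rels ⊆ commutator (FreeGroup α)) {u v : FreeGroup α}
    (h : PresentedGroup.mk rels u = PresentedGroup.mk rels v) :
    Abelianization.of u = Abelianization.of v := by
  refine QuotientGroup.eq.2 ?_
  exact Subgroup.normalClosure_le_normal hrels (QuotientGroup.eq.1 h)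

end PresentedGroup

theorem statement_17 (rels : Set (FreeGroup (Fin 2)))
    (hrels : rels ⊆ ↑(commutator (FreeGroup (Fin 2))))
    (φ : MulAut (FreeGroup (Fin 2)))
    (hinner : ∃ g : PresentedGroup rels, ∀ w : FreeGroup (Fin 2),
      PresentedGroup.mk rels (φ w) = g * PresentedGroup.mk rels w * g⁻¹) :
    ∃ u : FreeGroup (Fin 2), ∀ w : FreeGroup (Fin 2), φ w = u * w * u⁻¹ := by
  obtain ⟨g, hg⟩ := hinner
  obtain ⟨v, rfl⟩ := PresentedGroup.mk_surjective rels g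
  have hia : φ ∈ iaAut (FreeGroup (Fin 2)) := mem_iaAut_iff.2 fun w => by
    have hconj : PresentedGroup.mk rels (φ w) = PresentedGroup.mk rels (v * w * v⁻¹) := by
      rw [hg, map_mul, map_mul, map_inv]
    rw [abelianization_of_eq_of_presentedGroup_mk_eq hrels hconj, map_mul, map_mul, map_inv,
      mul_inv_cancel_comm]
  obtain ⟨u, rfl⟩ := iaAut_le_innAut hia
  exact ⟨u, fun w => rfl⟩
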